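/- Let W be an infinite word such that there is a constant C with factor complexity P(N) ≤ C·N for all N ≥ 1. Then the first difference P(N+1) − P(N) is bounded: there exists D such that P(N+1) − P(N) ≤ D for all N. -/

import Mathlib

/-- The factor (subword) of the infinite word `W` of length `n` starting at position `i`. -/
def factorAt {A : Type*} (W : ℕ → A) (i n : ℕ) : List A :=
  (List.range n).map (fun j => W (i + j))

/-- `u` is a finite factor of the infinite word `W`. -/
def IsFactorOf {A : Type*} (u : List A) (W : ℕ → A) : Prop :=
  ∃ i, u = factorAt W i u.length

section helpers
open Classical

variable {A : Type*}

lemma fa_eq_iff (W : ℕ → A) (i j n : ℕ) :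
    factorAt W i n = factorAt W j n ↔ ∀ k < n, W (i + k) = W (j + k) := by
  simp [factorAt]

lemma fa_length (W : ℕ → A) (i n : ℕ) : (factorAt W i n).length = n := by
  simp [factorAt]

lemma fa_take (W : ℕ → A) (i n : ℕ) : (factorAt W i (n+1)).take n = factorAt W i n := by
  simp [factorAt, List.range_succ]

lemma fset_eq (W : ℕ → A) (N : ℕ) :
    {u : List A | IsFactorOf u W ∧ u.length = N} = Set.range (fun i => factorAt W i N) := by
  ext u
  constructor
  · rintro ⟨⟨i, hi⟩, rfl⟩
    exact ⟨i, hi.symm⟩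
  · rintro ⟨i, rfl⟩
    exact ⟨⟨i, by rw [fa_length]⟩, fa_length _ _ _⟩

lemma ffin [Fintype A] (W : ℕ → A) (N : ℕ) : (Set.range (fun i => factorAt W i N)).Finite :=
  (List.finite_length_eq A N).subset (by rintro _ ⟨i, rfl⟩; exact fa_length _ _ _)

noncomputable def FF [Fintype A] (W : ℕ → A) (N : ℕ) : Finset (List A) := (ffin W N).toFinset

lemma mem_FF [Fintype A] (W : ℕ → A) (N : ℕ) (u : List A) :
    u ∈ FF W N ↔ ∃ i, factorAt W i N = u := by simp [FF]

lemma ncard_FF [Fintype A] (W : ℕ → A) (N : ℕ) :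
    Set.ncard {u : List A | IsFactorOf u W ∧ u.length = N} = (FF W N).card := by
  rw [fset_eq, Set.ncard_eq_toFinset_card _ (ffin W N)]; rfl

def IsRS (W : ℕ → A) (m : ℕ) (v : List A) : Prop :=
  ∃ i j, factorAt W i m = v ∧ factorAt W j m = v ∧ W (i + m) ≠ W (j + m)

noncomputable def RR [Fintype A] (W : ℕ → A) (m : ℕ) : Finset (List A) :=
  (FF W m).filter (IsRS W m)

lemma mem_RR [Fintype A] (W : ℕ → A) (m : ℕ) (v : List A) : v ∈ RR W m ↔ IsRS W m v := by
  simp only [RR, Finset.mem_filter, mem_FF, and_iff_right_iff_imp]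
  rintro ⟨i, j, h, -⟩
  exact ⟨i, h⟩

def ShortRep (W : ℕ → A) (m : ℕ) (v : List A) (i : ℕ) : Prop :=
  ∃ d, 0 < d ∧ 2 * d ≤ m ∧ factorAt W i m = v ∧ factorAt W (i + d) m = v

noncomputable def cc (W : ℕ → A) (m : ℕ) (v : List A) : A :=
  if h : ∃ i, ShortRep W m v i then W (h.choose + m) else W 0

lemma rep_unique (W : ℕ → A) (m : ℕ) (v : List A) (i j : ℕ) (hi : ShortRep W m v i)
    (hj : ShortRep W m v j) : W (i + m) = W (j + m) := by
  obtain ⟨d, hd, hdm, h1, h2⟩ := hi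
  obtain ⟨e, he, hem, h3, h4⟩ := hj
  have a1 := (fa_eq_iff W _ _ _).1 (h2.trans h3.symm) (m - d) (by omega)
  have a2 := (fa_eq_iff W _ _ _).1 (h3.trans h4.symm) (m - d - e) (by omega)
  have a3 := (fa_eq_iff W _ _ _).1 (h1.trans h2.symm) (m - d - e) (by omega)
  have a4 := (fa_eq_iff W _ _ _).1 (h1.trans h3.symm) (m - d - e) (by omega)
  have a5 := (fa_eq_iff W _ _ _).1 (h1.trans h4.symm) (m - e) (by omega)
  rw [show i + d + (m - d) = i + m by omega] at a1
  rw [show j + e + (m - d - e) = j + (m - d) by omega] at a2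
  rw [show i + d + (m - d - e) = i + (m - e) by omega] at a3
  rw [show j + e + (m - e) = j + m by omega] at a5
  rw [a1, ← a2, ← a4, a3, a5]

lemma rep_cc (W : ℕ → A) (m : ℕ) (v : List A) (i : ℕ) (hi : ShortRep W m v i) :
    W (i + m) = cc W m v := by
  have h : ∃ i, ShortRep W m v i := ⟨i, hi⟩
  rw [cc, dif_pos h]
  exact rep_unique W m v _ _ hi h.choose_spec

/-- Positions of the chosen occurrences. -/
def Good (W : ℕ → A) (n m i : ℕ) : Prop :=
  IsRS W n (factorAt W i n) ∧ W (i + n) ≠ cc W m (factorAt W (i + (n - m)) m)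

lemma good_congr (W : ℕ → A) (n m i j : ℕ) (hmn : m ≤ n)
    (h : factorAt W i (n+1) = factorAt W j (n+1)) (hi : Good W n m i) : Good W n m j := by
  rw [fa_eq_iff] at h
  have h1 : factorAt W i n = factorAt W j n := (fa_eq_iff _ _ _ _).2 fun k hk => h k (by omega)
  have h2 : factorAt W (i + (n - m)) m = factorAt W (j + (n - m)) m :=
    (fa_eq_iff _ _ _ _).2 fun k hk => by
      rw [add_assoc, add_assoc]; exact h _ (by omega)
  have h3 := h n (by omega)
  unfold Good at *
  rwa [← h1, ← h2, ← h3]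

lemma good_suffix [Fintype A] (W : ℕ → A) (n m i : ℕ) (hmn : m ≤ n) (hi : Good W n m i) :
    factorAt W (i + (n - m)) m ∈ RR W m := by
  rw [mem_RR]
  obtain ⟨⟨a, b, ha, hb, hab⟩, -⟩ := hi
  rw [fa_eq_iff] at ha hb
  refine ⟨a + (n - m), b + (n - m), ?_, ?_, ?_⟩
  · rw [fa_eq_iff]; intro k hk; rw [add_assoc, add_assoc]; exact ha _ (by omega)
  · rw [fa_eq_iff]; intro k hk; rw [add_assoc, add_assoc]; exact hb _ (by omega)
  · rwa [show a + (n - m) + m = a + n by omega, show b + (n - m) + m = b + n by omega]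

lemma good_sep (W : ℕ → A) (n m i j : ℕ) (hmn : m ≤ n) (hij : i < j) (hd : 2 * (j - i) ≤ m)
    (hi : Good W n m i)
    (h : factorAt W (i + (n - m)) m = factorAt W (j + (n - m)) m) : False := by
  apply hi.2
  have := rep_cc W m (factorAt W (i + (n - m)) m) (i + (n - m))
    ⟨j - i, by omega, hd, rfl, by
      rw [show i + (n - m) + (j - i) = j + (n - m) by omega]; exact h.symm⟩
  rwa [show i + (n - m) + m = i + n by omega] at this

lemma good_count [Fintype A] (W : ℕ → A) (n m g : ℕ) (hmn : m ≤ n) (hg : 2 * g ≤ m) (a : ℕ)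
    (S : Finset ℕ) (hS : ∀ s ∈ S, s < g ∧ Good W n m (a + s)) : S.card ≤ (RR W m).card := by
  apply Finset.card_le_card_of_injOn (fun s => factorAt W (a + s + (n - m)) m)
  · intro s hs
    exact good_suffix W n m _ hmn (hS s hs).2
  · intro s hs t ht hst
    have h1 := hS s hs
    have h2 := hS t ht
    rcases lt_trichotomy s t with h | h | h
    · exact (good_sep W n m _ _ hmn (by omega) (by omega) h1.2 hst).elim
    · exact h
    · exact (good_sep W n m _ _ hmn (by omega) (by omega) h2.2 hst.symm).elim

noncomputable def BB [Fintype A] (W : ℕ → A) (n m : ℕ) : Finset (List A) :=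
  (FF W (n+1)).filter (fun x => ∃ i, factorAt W i (n+1) = x ∧ Good W n m i)

lemma diff_le_BB [Fintype A] (W : ℕ → A) (n m : ℕ) (hmn : m ≤ n) :
    (FF W (n+1)).card ≤ (FF W n).card + (BB W n m).card := by
  have h1 : (FF W (n+1) \ BB W n m).card ≤ (FF W n).card := by
    apply Finset.card_le_card_of_injOn (fun x => x.take n)
    · intro x hx
      simp only [Finset.coe_sdiff, Set.mem_sdiff, Finset.mem_coe, mem_FF] at hx
      obtain ⟨⟨i, rfl⟩, -⟩ := hx
      simp only [fa_take, Finset.mem_coe, mem_FF]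
      exact ⟨i, rfl⟩
    · intro x hx y hy hxy
      simp only [Finset.coe_sdiff, Set.mem_sdiff, Finset.mem_coe, BB, Finset.mem_filter, mem_FF,
        not_and] at hx hy
      obtain ⟨⟨i, rfl⟩, hx⟩ := hx
      obtain ⟨⟨j, rfl⟩, hy⟩ := hy
      have hx' : ¬ Good W n m i := fun h => hx ⟨i, rfl⟩ ⟨i, rfl, h⟩
      have hy' : ¬ Good W n m j := fun h => hy ⟨j, rfl⟩ ⟨j, rfl, h⟩
      simp only [fa_take] at hxy
      have key : W (i + n) = W (j + n) := by
        by_contra hne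
        have r1 : IsRS W n (factorAt W i n) := ⟨i, j, rfl, hxy.symm, hne⟩
        have r2 : IsRS W n (factorAt W j n) := hxy ▸ r1
        have c1 : W (i + n) = cc W m (factorAt W (i + (n - m)) m) := by
          by_contra h; exact hx' ⟨r1, h⟩
        have c2 : W (j + n) = cc W m (factorAt W (j + (n - m)) m) := by
          by_contra h; exact hy' ⟨r2, h⟩
        apply hne
        rw [c1, c2]
        congr 1
        rw [fa_eq_iff] at hxy ⊢
        intro k hk
        rw [add_assoc, add_assoc]
        exact hxy _ (by omega)
      rw [fa_eq_iff] at hxy ⊢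
      intro k hk
      rcases Nat.lt_succ_iff_lt_or_eq.1 hk with h | rfl
      · exact hxy k h
      · exact key
  have h2 := Finset.card_le_card_sdiff_add_card (s := FF W (n+1)) (t := BB W n m)
  omega

lemma RR_le [Fintype A] (W : ℕ → A) (m : ℕ) :
    (FF W m).card + (RR W m).card ≤ (FF W (m+1)).card := by
  have hf : ∀ v, ∃ i, v ∈ FF W m → factorAt W i m = v := by
    intro v
    by_cases h : v ∈ FF W m
    · obtain ⟨i, hi⟩ := (mem_FF _ _ _).1 h
      exact ⟨i, fun _ => hi⟩
    · exact ⟨0, fun h' => (h h').elim⟩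
  choose p hp using hf
  have hq : ∀ v, ∃ j, v ∈ RR W m → factorAt W j m = v ∧ W (j + m) ≠ W (p v + m) := by
    intro v
    by_cases h : v ∈ RR W m
    · obtain ⟨i, j, hi, hj, hij⟩ := (mem_RR _ _ _).1 h
      by_cases h2 : W (i + m) = W (p v + m)
      · exact ⟨j, fun _ => ⟨hj, fun h3 => hij (h2.trans h3.symm)⟩⟩
      · exact ⟨i, fun _ => ⟨hi, h2⟩⟩
    · exact ⟨0, fun h' => (h h').elim⟩
  choose q hq using hq
  have e1 : ((FF W m).image (fun v => factorAt W (p v) (m+1))).card = (FF W m).card := by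
    apply Finset.card_image_of_injOn
    intro v hv u hu h
    have := congrArg (List.take m) h
    simp only [fa_take] at this
    rwa [hp v hv, hp u hu] at this
  have e2 : ((RR W m).image (fun v => factorAt W (q v) (m+1))).card = (RR W m).card := by
    apply Finset.card_image_of_injOn
    intro v hv u hu h
    have := congrArg (List.take m) h
    simp only [fa_take] at this
    rwa [(hq v hv).1, (hq u hu).1] at this
  rw [← e1, ← e2, ← Finset.card_union_of_disjoint]
  · apply Finset.card_le_card
    intro x hx
    rw [mem_FF]
    simp only [Finset.mem_union, Finset.mem_image] at hx
    rcases hx with ⟨v, -, h⟩ | ⟨v, -, h⟩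
    · exact ⟨_, h⟩
    · exact ⟨_, h⟩
  · rw [Finset.disjoint_left]
    intro x hx hy
    simp only [Finset.mem_image] at hx hy
    obtain ⟨v, hv, rfl⟩ := hx
    obtain ⟨u, hu, h⟩ := hy
    have h1 := congrArg (List.take m) h
    simp only [fa_take] at h1
    rw [(hq u hu).1, hp v hv] at h1
    subst h1
    exact (hq u hu).2 ((fa_eq_iff _ _ _ _).1 h m (by omega))

lemma sum_RR [Fintype A] (W : ℕ → A) (a k : ℕ) :
    ∑ t ∈ Finset.range k, (RR W (a + t)).card ≤ (FF W (a + k)).card := by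
  induction k with
  | zero => simp
  | succ k ih =>
    rw [Finset.sum_range_succ]
    have := RR_le W (a + k)
    rw [← add_assoc]
    omega

lemma BB_le [Fintype A] (W : ℕ → A) (n m g : ℕ) (hmn : m ≤ n) (hg : 2 * g ≤ m) :
    g * (BB W n m).card ≤ g * (RR W m).card + (RR W m).card * (FF W (n + 1 + g)).card := by
  have hp : ∀ x, ∃ i, x ∈ BB W n m → factorAt W i (n+1) = x ∧ Good W n m i := by
    intro x
    by_cases h : x ∈ BB W n m
    · obtain ⟨i, hi⟩ := (Finset.mem_filter.1 h).2
      exact ⟨i, fun _ => hi⟩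
    · exact ⟨0, fun h' => (h h').elim⟩
  choose p hp using hp
  have h1 : ((BB W n m).filter (fun x => p x < g)).card ≤ (RR W m).card := by
    rw [← Finset.card_image_of_injOn (f := p)]
    · apply good_count W n m g hmn hg 0
      intro s hs
      simp only [Finset.mem_image, Finset.mem_filter] at hs
      obtain ⟨x, ⟨hx, hxg⟩, rfl⟩ := hs
      rw [zero_add]
      exact ⟨hxg, (hp x hx).2⟩
    · intro x hx y hy hxy
      simp only [Finset.coe_filter, Set.mem_ofPred_eq] at hx hy
      rw [← (hp x hx.1).1, ← (hp y hy.1).1, hxy]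
  have h2 : (((BB W n m).filter (fun x => ¬ p x < g)) ×ˢ Finset.range g).card
      ≤ (RR W m).card * (FF W (n + 1 + g)).card := by
    apply Finset.card_le_mul_card_image_of_maps_to
      (f := fun z : List A × ℕ => factorAt W (p z.1 - z.2) (n + 1 + g))
    · intro z _
      exact (mem_FF _ _ _).2 ⟨_, rfl⟩
    · intro U hU
      obtain ⟨a, rfl⟩ := (mem_FF _ _ _).1 hU
      have key : ∀ z : List A × ℕ, z.1 ∈ BB W n m → ¬ p z.1 < g → z.2 < g →
          factorAt W (p z.1 - z.2) (n + 1 + g) = factorAt W a (n + 1 + g) →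
          factorAt W (p z.1) (n + 1) = factorAt W (a + z.2) (n + 1) := by
        intro z hz hzg hz2 h
        rw [fa_eq_iff] at h ⊢
        intro k hk
        have := h (z.2 + k) (by omega)
        rwa [show p z.1 - z.2 + (z.2 + k) = p z.1 + k by omega, ← add_assoc] at this
      rw [← Finset.card_image_of_injOn (f := Prod.snd)]
      · apply good_count W n m g hmn hg a
        intro s hs
        simp only [Finset.mem_image, Finset.mem_filter, Finset.mem_product,
          Finset.mem_range] at hs
        obtain ⟨z, ⟨⟨⟨hz, hzg⟩, hz2⟩, h⟩, rfl⟩ := hs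
        exact ⟨hz2, good_congr W n m _ _ hmn (key z hz hzg hz2 h) (hp _ hz).2⟩
      · intro z hz y hy hzy
        simp only [Finset.coe_filter, Set.mem_ofPred_eq, Finset.mem_filter, Finset.mem_product,
          Finset.mem_range] at hz hy
        obtain ⟨⟨⟨hz, hzg⟩, hz2⟩, h⟩ := hz
        obtain ⟨⟨⟨hy, hyg⟩, hy2⟩, h'⟩ := hy
        refine Prod.ext ?_ hzy
        rw [← (hp _ hz).1, ← (hp _ hy).1, key z hz hzg hz2 h, key y hy hyg hy2 h', hzy]
  rw [Finset.card_product, Finset.card_range] at h2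
  have h3 := Finset.card_filter_add_card_filter_not (s := BB W n m) (fun x => p x < g)
  rw [← h3, mul_add]
  have := Nat.mul_le_mul_left g h1
  rw [mul_comm] at h2
  omega

end helpers

/-- Cassaigne: linear complexity implies bounded first differences of complexity. -/
theorem stmt9 {A : Type*} [Fintype A] (W : ℕ → A) (C : ℕ)
    (h : ∀ N ≥ 1, Set.ncard {u : List A | IsFactorOf u W ∧ u.length = N} ≤ C * N) :
    ∃ D : ℕ, ∀ N : ℕ,
      Set.ncard {u : List A | IsFactorOf u W ∧ u.length = N + 1} ≤
      Set.ncard {u : List A | IsFactorOf u W ∧ u.length = N} + D := by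
  classical
  simp only [ncard_FF] at h ⊢
  refine ⟨2 * C * (9 * C + 1) + (FF W 1).card + (FF W 2).card + (FF W 3).card + (FF W 4).card,
    fun N => ?_⟩
  rcases Nat.lt_or_ge N 4 with hN | hN
  · interval_cases N <;> simp only [Nat.reduceAdd, zero_add] <;> omega
  obtain ⟨g, hg, hg1, hg2⟩ : ∃ g, 1 ≤ g ∧ 4 * g ≤ N ∧ N < 4 * g + 4 :=
    ⟨N / 4, by omega, by omega, by omega⟩
  obtain ⟨t, ht, hR⟩ : ∃ t < 2 * g, (RR W (2 * g + t)).card ≤ 2 * C := by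
    by_contra! hcon
    have h1 := sum_RR W (2 * g) (2 * g)
    have h2 := h (2 * g + 2 * g) (by omega)
    have h3 : ∑ t ∈ Finset.range (2 * g), (2 * C + 1) ≤
        ∑ t ∈ Finset.range (2 * g), (RR W (2 * g + t)).card :=
      Finset.sum_le_sum fun t ht => hcon t (Finset.mem_range.1 ht)
    simp only [Finset.sum_const, Finset.card_range, smul_eq_mul] at h3
    nlinarith
  have hmn : 2 * g + t ≤ N := by omega
  have h1 := diff_le_BB W N (2 * g + t) hmn
  have h2 := BB_le W N (2 * g + t) g hmn (by omega)
  have h3 : (FF W (N + 1 + g)).card ≤ C * (9 * g) :=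
    (h _ (by omega)).trans (Nat.mul_le_mul_left _ (by omega))
  have h4 : (BB W N (2 * g + t)).card ≤ 2 * C * (9 * C + 1) := by
    apply Nat.le_of_mul_le_mul_left _ (show 0 < g by omega)
    calc _ ≤ _ := h2
      _ ≤ g * (2 * C) + (2 * C) * (C * (9 * g)) := by gcongr
      _ = _ := by ring
  omega
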